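/- Let N be a positive integer and δ₀ ∈ (0,1). There exists a constant c > 0, depending only on N and δ₀, such that for all s, t with 0 < s < t < 1 and t − s ≥ δ₀ and every measurable set E ⊆ ℝ^N with |E| < ∞, one has ((1−t)·P_t(E))^{(N−s)/(N−t)} ≥ c · s·P_s(E) (as an inequality in [0,∞]). -/

import Mathlib

open MeasureTheory ENNReal

/-- Interaction energy `∫_A ∫_B |x-y|^{-(N+α)} dy dx` in `[0,∞]`. -/
noncomputable def interEnergy (N : ℕ) (α : ℝ)
    (A B : Set (EuclideanSpace ℝ (Fin N))) : ℝ≥0∞ :=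
  ∫⁻ x in A, ∫⁻ y in B, ENNReal.ofReal (‖x - y‖ ^ (-((N : ℝ) + α))) ∂volume ∂volume

/-- The fractional `α`-perimeter `P_α(E) = ∫_E ∫_{Eᶜ} |x-y|^{-(N+α)} dy dx`. -/
noncomputable def fracPer (N : ℕ) (α : ℝ) (E : Set (EuclideanSpace ℝ (Fin N))) : ℝ≥0∞ :=
  interEnergy N α E Eᶜ

/-!
The perimeter `P_α(E)` is the integral over displacements `h` of `‖h‖ ^ (-(N + α))` times the
translation defect `|{x ∈ E | x + h ∉ E}|`. The defect is subadditive in `h`, so passing from a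
dyadic shell of displacements to the next smaller one shrinks the contribution to `P_t(E)` by at
most the factor `2 ^ (-(1 - t))`. Summing the geometric series, every single shell contributes at
most `log 2 * (1 - t) P_t(E)`. For `s < t`, another geometric series then bounds the contribution of
`‖h‖ ≤ R` to `P_s(E)` by a multiple of `R ^ (t - s) * (1 - t) P_t(E)`, while `‖h‖ > R` contributes
at most a multiple of `R ^ (-s) * |E| / s`.

With `s = -N` the first bound controls the integral of the defect over a ball `B`, which is at
least `(|B| - |E|) * |E|`. Choosing `|B| = 2 |E|` gives the isoperimetric inequality
`|E| ≤ K * ((1 - t) P_t(E)) ^ (N / (N - t))`. Inserting it and taking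
`R = ((1 - t) P_t(E)) ^ (1 / (N - t))` balances the two parts of `P_s(E)`.
-/

open Metric Module Set

section TranslationDefect

variable {V : Type*} [AddCommGroup V] [MeasurableSpace V] (μ : Measure V)

/-- The measure of the part of `E` that leaves `E` under translation by `h`. Integrating it in `h`
against `‖h‖ ^ (-(N + α))` gives the fractional perimeter. -/
noncomputable def translationDefect (E : Set V) (h : V) : ℝ≥0∞ := μ {x ∈ E | x + h ∉ E}

lemma translationDefect_zero (E : Set V) : translationDefect μ E 0 = 0 := by
  simp [translationDefect]

lemma translationDefect_le_measure (E : Set V) (h : V) : translationDefect μ E h ≤ μ E :=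
  measure_mono (sep_subset _ _)

lemma translationDefect_add_le [MeasurableAdd V] [μ.IsAddLeftInvariant] (E : Set V) (h k : V) :
    translationDefect μ E (h + k) ≤ translationDefect μ E h + translationDefect μ E k := by
  have hsub : {x ∈ E | x + (h + k) ∉ E} ⊆
      {x ∈ E | x + h ∉ E} ∪ (· + h) ⁻¹' {x ∈ E | x + k ∉ E} := by
    rintro x ⟨hx, hxhk⟩
    by_cases hxh : x + h ∈ E
    · exact .inr ⟨hxh, by rwa [add_assoc]⟩
    · exact .inl ⟨hx, hxh⟩
  calc translationDefect μ E (h + k)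
      ≤ μ {x ∈ E | x + h ∉ E} + μ ((· + h) ⁻¹' {x ∈ E | x + k ∉ E}) :=
        (measure_mono hsub).trans (measure_union_le _ _)
    _ = translationDefect μ E h + translationDefect μ E k := by
        rw [measure_preimage_add_right, translationDefect, translationDefect]

variable [MeasurableAdd₂ V] [SFinite μ]

lemma measurable_translationDefect {E : Set V} (hE : MeasurableSet E) :
    Measurable (translationDefect μ E) :=
  measurable_measure_prodMk_left <| (hE.preimage measurable_snd).inter
    (hE.compl.preimage (measurable_snd.add measurable_fst))

variable [μ.IsAddLeftInvariant]

lemma setLIntegral_setLIntegral_sub (A : Set V) {B : Set V} (hB : MeasurableSet B) {k : V → ℝ≥0∞}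
    (hk : Measurable k) :
    ∫⁻ x in A, ∫⁻ y in B, k (y - x) ∂μ ∂μ = ∫⁻ h, k h * μ {x ∈ A | x + h ∈ B} ∂μ := by
  have hmeas : Measurable ({p : V × V | p.1 + p.2 ∈ B}.indicator fun p ↦ k p.2) :=
    (hk.comp measurable_snd).indicator (hB.preimage (measurable_fst.add measurable_snd))
  calc ∫⁻ x in A, ∫⁻ y in B, k (y - x) ∂μ ∂μ
      = ∫⁻ x in A, ∫⁻ h, {p : V × V | p.1 + p.2 ∈ B}.indicator (fun p ↦ k p.2) (x, h) ∂μ ∂μ := by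
        refine lintegral_congr fun x ↦ ?_
        rw [← lintegral_indicator hB, ← lintegral_add_left_eq_self _ x]
        simp [indicator]
    _ = ∫⁻ h, ∫⁻ x in A, ((· + h) ⁻¹' B).indicator (fun _ ↦ k h) x ∂μ ∂μ :=
        lintegral_lintegral_swap hmeas.aemeasurable
    _ = ∫⁻ h, k h * μ {x ∈ A | x + h ∈ B} ∂μ := by
        refine lintegral_congr fun h ↦ ?_
        have hBh : MeasurableSet ((· + h) ⁻¹' B) := hB.preimage (measurable_add_const h)
        rw [lintegral_indicator_const hBh, Measure.restrict_apply hBh, inter_comm]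
        rfl

lemma measure_mul_measure_le_setLIntegral_translationDefect_add {E : Set V}
    (hE : MeasurableSet E) (B : Set V) :
    μ B * μ E ≤ ∫⁻ h in B, translationDefect μ E h ∂μ + μ E * μ E := by
  have hoverlap : ∫⁻ h, μ {x ∈ E | x + h ∈ E} ∂μ = μ E * μ E := by
    simpa using (setLIntegral_setLIntegral_sub μ E hE (measurable_const (a := (1 : ℝ≥0∞)))).symm
  have hsplit (h : V) : μ E ≤ translationDefect μ E h + μ {x ∈ E | x + h ∈ E} := by
    refine (measure_mono fun x hx ↦ ?_).trans (measure_union_le _ _)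
    by_cases hxh : x + h ∈ E
    · exact .inr ⟨hx, hxh⟩
    · exact .inl ⟨hx, hxh⟩
  calc μ B * μ E = ∫⁻ _ in B, μ E ∂μ := by rw [setLIntegral_const, mul_comm]
    _ ≤ ∫⁻ h in B, translationDefect μ E h + μ {x ∈ E | x + h ∈ E} ∂μ := lintegral_mono hsplit
    _ = ∫⁻ h in B, translationDefect μ E h ∂μ + ∫⁻ h in B, μ {x ∈ E | x + h ∈ E} ∂μ :=
        lintegral_add_left (measurable_translationDefect μ hE) _
    _ ≤ ∫⁻ h in B, translationDefect μ E h ∂μ + μ E * μ E := by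
        rw [← hoverlap]
        gcongr
        exact Measure.restrict_le_self

end TranslationDefect

section DyadicShell

variable {V : Type*} [NormedAddCommGroup V]

/-- The dyadic shell `r / 2 < ‖h‖ ≤ r`; the shells of radii `R / 2 ^ k` partition a punctured
ball. -/
def dyadicShell (V : Type*) [NormedAddCommGroup V] (r : ℝ) : Set V := norm ⁻¹' Ioc (r / 2) r

lemma measurableSet_dyadicShell [MeasurableSpace V] [OpensMeasurableSpace V] (r : ℝ) :
    MeasurableSet (dyadicShell V r) :=
  measurableSet_Ioc.preimage measurable_norm

lemma dyadicShell_subset_closedBall (r : ℝ) : dyadicShell V r ⊆ closedBall 0 r :=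
  fun _ h ↦ mem_closedBall_zero_iff.2 h.2

lemma preimage_two_smul_dyadicShell [NormedSpace ℝ V] (r : ℝ) :
    ((2 : ℝ) • ·) ⁻¹' dyadicShell V r = dyadicShell V (r / 2) := by
  ext h
  simp only [dyadicShell, mem_preimage, mem_Ioc, norm_smul, Real.norm_ofNat]
  constructor <;> rintro ⟨h₁, h₂⟩ <;> constructor <;> linarith

lemma pairwise_disjoint_dyadicShell {R : ℝ} (hR : 0 ≤ R) :
    Pairwise (Function.onFun Disjoint fun k : ℕ ↦ dyadicShell V (R / 2 ^ k)) := by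
  have hanti : Antitone fun k : ℕ ↦ R / 2 ^ k := fun i j hij ↦
    div_le_div_of_nonneg_left hR (by positivity) (pow_le_pow_right₀ one_le_two hij)
  intro i j hij
  have hdisj := hanti.pairwise_disjoint_on_Ioc_succ hij
  simp only [Function.onFun, Nat.succ_eq_succ, Nat.succ_eq_add_one, pow_succ, ← div_div] at hdisj
  exact hdisj.preimage norm

lemma iUnion_dyadicShell {R : ℝ} (hR : 0 < R) :
    ⋃ k : ℕ, dyadicShell V (R / 2 ^ k) = closedBall 0 R \ {0} := by
  ext h
  simp only [mem_iUnion, mem_sdiff, mem_closedBall_zero_iff, mem_singleton_iff]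
  constructor
  · rintro ⟨k, hlow, hup⟩
    have hpos : 0 < ‖h‖ := lt_trans (by positivity) hlow
    exact ⟨hup.trans (div_le_self hR.le (one_le_pow₀ one_le_two)), norm_pos_iff.1 hpos⟩
  · rintro ⟨hle, hne⟩
    obtain ⟨k, hlow, hup⟩ := exists_nat_pow_near_of_lt_one (div_pos (norm_pos_iff.2 hne) hR)
      ((div_le_one hR).2 hle) (inv_pos.2 two_pos) (inv_lt_one_of_one_lt₀ (one_lt_two (α := ℝ)))
    rw [lt_div_iff₀ hR, inv_pow, inv_mul_eq_div, pow_succ, ← div_div] at hlow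
    rw [div_le_iff₀ hR, inv_pow, inv_mul_eq_div] at hup
    exact ⟨k, hlow, hup⟩

end DyadicShell

lemma tsum_ofReal_pow {x : ℝ} (hx₀ : 0 ≤ x) (hx₁ : x < 1) :
    ∑' k : ℕ, ENNReal.ofReal x ^ k = ENNReal.ofReal (1 - x)⁻¹ := by
  rw [ENNReal.tsum_geometric, ENNReal.ofReal_inv_of_pos (sub_pos.2 hx₁), ENNReal.ofReal_sub _ hx₀,
    ENNReal.ofReal_one]

lemma two_rpow_neg_lt_one {x : ℝ} (hx : 0 < x) : (2 : ℝ) ^ (-x) < 1 :=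
  Real.rpow_lt_one_of_one_lt_of_neg one_lt_two (neg_neg_of_pos hx)

lemma one_sub_two_rpow_neg_le (x : ℝ) : 1 - (2 : ℝ) ^ (-x) ≤ Real.log 2 * x := by
  have := Real.add_one_le_exp (Real.log 2 * -x)
  rw [Real.rpow_def_of_pos two_pos]
  linarith

/-- The geometric series `log 2 * ∑ k, (2 ^ (-x)) ^ k`: what summing over the dyadic shells of a
ball costs when the `k`-th shell carries the weight `2 ^ (-x * k)`. -/
noncomputable def dyadicConst (x : ℝ) : ℝ := Real.log 2 / (1 - 2 ^ (-x))

lemma dyadicConst_pos {x : ℝ} (hx : 0 < x) : 0 < dyadicConst x :=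
  div_pos (Real.log_pos one_lt_two) (sub_pos.2 (two_rpow_neg_lt_one hx))

lemma dyadicConst_le_of_le {x y : ℝ} (hx : 0 < x) (hxy : x ≤ y) :
    dyadicConst y ≤ dyadicConst x := by
  have : 0 < 1 - (2 : ℝ) ^ (-x) := sub_pos.2 (two_rpow_neg_lt_one hx)
  unfold dyadicConst
  gcongr
  exact one_le_two

lemma measureReal_ball_pos {X : Type*} [PseudoMetricSpace X] [ProperSpace X] [MeasurableSpace X]
    (μ : Measure X) [μ.IsOpenPosMeasure] [IsFiniteMeasureOnCompacts μ] (x : X) {r : ℝ}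
    (hr : 0 < r) : 0 < μ.real (ball x r) :=
  ENNReal.toReal_pos (measure_ball_pos μ x hr).ne' measure_ball_lt_top.ne

section LocalFracPer

variable {V : Type*} [NormedAddCommGroup V] [NormedSpace ℝ V]

/-- The kernel `‖h‖ ^ (-(dim V + α))` of the fractional `α`-perimeter. -/
noncomputable def fracKernel (α : ℝ) (h : V) : ℝ≥0∞ :=
  ENNReal.ofReal (‖h‖ ^ (-(finrank ℝ V + α)))

lemma fracKernel_two_smul (α : ℝ) (h : V) :
    fracKernel α ((2 : ℝ) • h) =
      ENNReal.ofReal (2 ^ (-(finrank ℝ V + α))) * fracKernel α h := by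
  rw [fracKernel, fracKernel, ← ENNReal.ofReal_mul (by positivity), norm_smul, Real.norm_ofNat,
    Real.mul_rpow zero_le_two (norm_nonneg h)]

lemma fracKernel_le_of_norm_le {s t r : ℝ} (hst : s ≤ t) {h : V} (h₀ : h ≠ 0) (hr : ‖h‖ ≤ r) :
    fracKernel s h ≤ ENNReal.ofReal (r ^ (t - s)) * fracKernel t h := by
  have hpos : 0 < ‖h‖ := norm_pos_iff.2 h₀
  have hr₀ : 0 ≤ r := hpos.le.trans hr
  rw [fracKernel, fracKernel, ← ENNReal.ofReal_mul (by positivity)]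
  apply ENNReal.ofReal_le_ofReal
  calc ‖h‖ ^ (-(finrank ℝ V + s)) = ‖h‖ ^ (t - s) * ‖h‖ ^ (-(finrank ℝ V + t)) := by
        rw [← Real.rpow_add hpos]
        ring_nf
    _ ≤ r ^ (t - s) * ‖h‖ ^ (-(finrank ℝ V + t)) := by
        gcongr

variable [MeasurableSpace V]

lemma measurable_fracKernel [OpensMeasurableSpace V] (α : ℝ) :
    Measurable (fracKernel (V := V) α) := by
  unfold fracKernel
  fun_prop

variable (μ : Measure V)

/-- The contribution of the displacements `y - x ∈ S` to the fractional `α`-perimeter of `E`. -/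
noncomputable def localFracPer (α : ℝ) (E S : Set V) : ℝ≥0∞ :=
  ∫⁻ h in S, fracKernel α h * translationDefect μ E h ∂μ

lemma localFracPer_mono (α : ℝ) (E : Set V) {S T : Set V} (hST : S ⊆ T) :
    localFracPer μ α E S ≤ localFracPer μ α E T :=
  lintegral_mono_set hST

lemma localFracPer_le_of_subset_closedBall {s t r : ℝ} (hst : s ≤ t) (E : Set V) {S : Set V}
    (hS : MeasurableSet S) (hSr : S ⊆ closedBall 0 r) :
    localFracPer μ s E S ≤ ENNReal.ofReal (r ^ (t - s)) * localFracPer μ t E S := by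
  rw [localFracPer, localFracPer, ← lintegral_const_mul' _ _ ENNReal.ofReal_ne_top]
  refine setLIntegral_mono' hS fun h hh ↦ ?_
  rcases eq_or_ne h 0 with rfl | h₀
  · simp [translationDefect_zero]
  · rw [← mul_assoc]
    gcongr
    exact fracKernel_le_of_norm_le hst h₀ (mem_closedBall_zero_iff.1 (hSr hh))

variable [BorelSpace V] [FiniteDimensional ℝ V] [μ.IsAddHaarMeasure]

lemma setLIntegral_eq_mul_setLIntegral_comp_smul (f : V → ℝ≥0∞) (S : Set V) {c : ℝ} (hc : c ≠ 0) :
    ∫⁻ h in S, f h ∂μ =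
      ENNReal.ofReal |c ^ finrank ℝ V| * ∫⁻ h in (c • ·) ⁻¹' S, f (c • h) ∂μ := by
  have hemb := measurableEmbedding_const_smul₀ (α := V) hc
  rw [← hemb.lintegral_map, ← hemb.restrict_map, Measure.map_addHaar_smul μ hc,
    Measure.restrict_smul, lintegral_smul_measure, smul_eq_mul, ← mul_assoc,
    ← ENNReal.ofReal_mul (abs_nonneg _), ← abs_mul, mul_inv_cancel₀ (pow_ne_zero _ hc), abs_one,
    ENNReal.ofReal_one, one_mul]

lemma localFracPer_le_preimage_two_smul (t : ℝ) (E S : Set V) :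
    localFracPer μ t E S ≤
      ENNReal.ofReal (2 ^ (1 - t)) * localFracPer μ t E (((2 : ℝ) • ·) ⁻¹' S) := by
  have hdefect (h : V) : translationDefect μ E ((2 : ℝ) • h) ≤ 2 * translationDefect μ E h := by
    simpa only [two_smul, two_mul] using translationDefect_add_le μ E h h
  have hconst : (2 : ℝ) ^ (1 - t) = 2 ^ finrank ℝ V * (2 ^ (-(finrank ℝ V + t)) * 2) := by
    rw [← Real.rpow_natCast, ← Real.rpow_add_one two_ne_zero, ← Real.rpow_add two_pos]
    ring_nf
  calc localFracPer μ t E S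
      = ENNReal.ofReal (2 ^ finrank ℝ V) * ∫⁻ h in ((2 : ℝ) • ·) ⁻¹' S,
          fracKernel t ((2 : ℝ) • h) * translationDefect μ E ((2 : ℝ) • h) ∂μ := by
        rw [localFracPer, setLIntegral_eq_mul_setLIntegral_comp_smul μ _ S two_ne_zero,
          abs_of_pos (by positivity)]
    _ ≤ ENNReal.ofReal (2 ^ finrank ℝ V) * ∫⁻ h in ((2 : ℝ) • ·) ⁻¹' S,
          ENNReal.ofReal (2 ^ (-(finrank ℝ V + t)) * 2) *
            (fracKernel t h * translationDefect μ E h) ∂μ := by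
        refine mul_le_mul_right (lintegral_mono fun h ↦ ?_) _
        rw [fracKernel_two_smul, ENNReal.ofReal_mul (by positivity), ENNReal.ofReal_ofNat,
          mul_mul_mul_comm]
        gcongr
        exact hdefect h
    _ = ENNReal.ofReal (2 ^ (1 - t)) * localFracPer μ t E (((2 : ℝ) • ·) ⁻¹' S) := by
        rw [lintegral_const_mul' _ _ ENNReal.ofReal_ne_top, ← mul_assoc,
          ← ENNReal.ofReal_mul (by positivity), ← hconst, localFracPer]

lemma two_rpow_mul_localFracPer_dyadicShell_le (t r : ℝ) (E : Set V) :
    ENNReal.ofReal (2 ^ (-(1 - t))) * localFracPer μ t E (dyadicShell V r) ≤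
      localFracPer μ t E (dyadicShell V (r / 2)) := by
  calc ENNReal.ofReal (2 ^ (-(1 - t))) * localFracPer μ t E (dyadicShell V r)
      ≤ ENNReal.ofReal (2 ^ (-(1 - t))) *
          (ENNReal.ofReal (2 ^ (1 - t)) * localFracPer μ t E (dyadicShell V (r / 2))) := by
        gcongr
        simpa only [preimage_two_smul_dyadicShell] using
          localFracPer_le_preimage_two_smul μ t E (dyadicShell V r)
    _ = localFracPer μ t E (dyadicShell V (r / 2)) := by
        rw [← mul_assoc, ← ENNReal.ofReal_mul (by positivity), ← Real.rpow_add two_pos,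
          neg_add_cancel, Real.rpow_zero, ENNReal.ofReal_one, one_mul]

lemma two_rpow_pow_mul_localFracPer_dyadicShell_le (t r : ℝ) (E : Set V) (k : ℕ) :
    ENNReal.ofReal (2 ^ (-(1 - t))) ^ k * localFracPer μ t E (dyadicShell V r) ≤
      localFracPer μ t E (dyadicShell V (r / 2 ^ k)) := by
  induction k with
  | zero => simp
  | succ k ih =>
    rw [pow_succ', mul_assoc, pow_succ, ← div_div]
    exact (mul_le_mul_right ih _).trans (two_rpow_mul_localFracPer_dyadicShell_le μ t _ E)

variable [Nontrivial V]

lemma localFracPer_closedBall_eq_tsum (α : ℝ) (E : Set V) {R : ℝ} (hR : 0 < R) :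
    localFracPer μ α E (closedBall 0 R) =
      ∑' k : ℕ, localFracPer μ α E (dyadicShell V (R / 2 ^ k)) := by
  simp only [localFracPer]
  rw [← lintegral_iUnion (fun _ ↦ measurableSet_dyadicShell _)
    (pairwise_disjoint_dyadicShell hR.le), iUnion_dyadicShell hR]
  exact setLIntegral_congr (sdiff_null_ae_eq_self (measure_singleton 0)).symm

lemma localFracPer_dyadicShell_le {t R : ℝ} (ht : t < 1) (hR : 0 < R) (E : Set V) :
    localFracPer μ t E (dyadicShell V R) ≤
      ENNReal.ofReal (Real.log 2) * (ENNReal.ofReal (1 - t) * localFracPer μ t E univ) := by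
  have hratio : (2 : ℝ) ^ (-(1 - t)) < 1 := two_rpow_neg_lt_one (sub_pos.2 ht)
  have hpos : 0 < 1 - (2 : ℝ) ^ (-(1 - t)) := sub_pos.2 hratio
  have hgeom : (ENNReal.ofReal (1 - 2 ^ (-(1 - t))))⁻¹ * localFracPer μ t E (dyadicShell V R) ≤
      localFracPer μ t E univ := by
    rw [← ENNReal.ofReal_inv_of_pos hpos, ← tsum_ofReal_pow (by positivity) hratio,
      ← ENNReal.tsum_mul_right]
    calc ∑' k : ℕ, ENNReal.ofReal (2 ^ (-(1 - t))) ^ k * localFracPer μ t E (dyadicShell V R)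
        ≤ ∑' k : ℕ, localFracPer μ t E (dyadicShell V (R / 2 ^ k)) :=
          ENNReal.tsum_le_tsum (two_rpow_pow_mul_localFracPer_dyadicShell_le μ t R E)
      _ ≤ localFracPer μ t E univ := by
          rw [← localFracPer_closedBall_eq_tsum μ t E hR]
          exact localFracPer_mono μ t E (subset_univ _)
  rw [ENNReal.inv_mul_le_iff (ENNReal.ofReal_pos.2 hpos).ne' ENNReal.ofReal_ne_top] at hgeom
  rw [← mul_assoc, ← ENNReal.ofReal_mul (Real.log_nonneg one_le_two)]
  exact hgeom.trans (by gcongr; exact one_sub_two_rpow_neg_le _)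

lemma localFracPer_closedBall_le {s t R : ℝ} (hst : s < t) (ht : t < 1) (hR : 0 < R) (E : Set V) :
    localFracPer μ s E (closedBall 0 R) ≤
      ENNReal.ofReal (dyadicConst (t - s) * R ^ (t - s)) *
        (ENNReal.ofReal (1 - t) * localFracPer μ t E univ) := by
  set Q := ENNReal.ofReal (1 - t) * localFracPer μ t E univ
  have hratio : (2 : ℝ) ^ (-(t - s)) < 1 := two_rpow_neg_lt_one (sub_pos.2 hst)
  have hradius (k : ℕ) : (R / 2 ^ k) ^ (t - s) = (2 ^ (-(t - s))) ^ k * R ^ (t - s) := by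
    rw [Real.div_rpow hR.le (by positivity), Real.rpow_neg zero_le_two, inv_pow,
      ← Real.rpow_pow_comm zero_le_two, inv_mul_eq_div]
  have hshell (k : ℕ) : localFracPer μ s E (dyadicShell V (R / 2 ^ k)) ≤
      ENNReal.ofReal (2 ^ (-(t - s))) ^ k *
        (ENNReal.ofReal (R ^ (t - s)) * (ENNReal.ofReal (Real.log 2) * Q)) := by
    rw [← mul_assoc, ← ENNReal.ofReal_pow (by positivity), ← ENNReal.ofReal_mul (by positivity),
      ← hradius]
    refine (localFracPer_le_of_subset_closedBall μ hst.le E (measurableSet_dyadicShell _)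
      (dyadicShell_subset_closedBall _)).trans ?_
    gcongr
    exact localFracPer_dyadicShell_le μ ht (by positivity) E
  calc localFracPer μ s E (closedBall 0 R)
      ≤ ∑' k : ℕ, ENNReal.ofReal (2 ^ (-(t - s))) ^ k *
          (ENNReal.ofReal (R ^ (t - s)) * (ENNReal.ofReal (Real.log 2) * Q)) := by
        rw [localFracPer_closedBall_eq_tsum μ s E hR]
        exact ENNReal.tsum_le_tsum hshell
    _ = ENNReal.ofReal (dyadicConst (t - s) * R ^ (t - s)) * Q := by
        have hinv : 0 ≤ (1 - (2 : ℝ) ^ (-(t - s)))⁻¹ := inv_nonneg.2 (by linarith)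
        rw [ENNReal.tsum_mul_right, tsum_ofReal_pow (by positivity) hratio, ← mul_assoc,
          ← mul_assoc, ← ENNReal.ofReal_mul hinv, ← ENNReal.ofReal_mul (by positivity)]
        rw [dyadicConst]
        ring_nf

lemma setLIntegral_compl_closedBall_fracKernel {s R : ℝ} (hs : 0 < s) (hR : 0 < R) :
    ∫⁻ h in (closedBall 0 R)ᶜ, fracKernel s h ∂μ =
      ENNReal.ofReal (finrank ℝ V * μ.real (ball 0 1) * (R ^ (-s) / s)) := by
  set f : ℝ → ℝ := (Ioi R).indicator fun y ↦ y ^ (-(finrank ℝ V + s))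
  have hf₀ (h : V) : 0 ≤ f ‖h‖ :=
    indicator_nonneg (fun _ hy ↦ Real.rpow_nonneg (hR.trans hy).le _) _
  have hradial : EqOn (fun y ↦ y ^ (finrank ℝ V - 1) • f y)
      ((Ioi R).indicator fun y ↦ y ^ (-1 - s)) (Ioi 0) := by
    intro y (hy : 0 < y)
    by_cases hyR : y ∈ Ioi R
    · simp only [f, indicator_of_mem hyR, smul_eq_mul]
      rw [← Real.rpow_natCast, ← Real.rpow_add hy, Nat.cast_pred finrank_pos]
      ring_nf
    · simp only [f, indicator_of_notMem hyR, smul_zero]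
  have hIoi : Ioi R ∩ Ioi 0 = Ioi R := inter_eq_left.2 (Ioi_subset_Ioi hR.le)
  have hint : Integrable (fun h : V ↦ f ‖h‖) μ := by
    rw [integrable_fun_norm_addHaar, integrableOn_congr_fun hradial measurableSet_Ioi, IntegrableOn,
      integrable_indicator_iff measurableSet_Ioi, IntegrableOn,
      Measure.restrict_restrict measurableSet_Ioi, hIoi]
    exact integrableOn_Ioi_rpow_of_lt (by linarith) hR
  have hval : ∫ h, f ‖h‖ ∂μ = finrank ℝ V * μ.real (ball 0 1) * (R ^ (-s) / s) := by
    rw [integral_fun_norm_addHaar, setIntegral_congr_fun measurableSet_Ioi hradial,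
      setIntegral_indicator measurableSet_Ioi, inter_comm, hIoi,
      integral_Ioi_rpow_of_lt (by linarith) hR, nsmul_eq_mul, smul_eq_mul, mul_assoc,
      show -1 - s + 1 = -s by ring, neg_div_neg_eq]
  rw [← hval, ofReal_integral_eq_lintegral_ofReal hint (.of_forall hf₀),
    ← lintegral_indicator measurableSet_closedBall.compl]
  refine lintegral_congr fun h ↦ ?_
  by_cases hh : R < ‖h‖ <;> simp [f, fracKernel, indicator, hh]

lemma ofReal_mul_localFracPer_compl_closedBall_le {s R : ℝ} (hs : 0 < s) (hR : 0 < R) (E : Set V) :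
    ENNReal.ofReal s * localFracPer μ s E (closedBall 0 R)ᶜ ≤
      ENNReal.ofReal (finrank ℝ V * μ.real (ball 0 1) * R ^ (-s)) * μ E := by
  calc ENNReal.ofReal s * localFracPer μ s E (closedBall 0 R)ᶜ
      ≤ ENNReal.ofReal s * ∫⁻ h in (closedBall 0 R)ᶜ, fracKernel s h * μ E ∂μ := by
        rw [localFracPer]
        gcongr with h
        exact translationDefect_le_measure μ E h
    _ = ENNReal.ofReal (finrank ℝ V * μ.real (ball 0 1) * R ^ (-s)) * μ E := by
        rw [lintegral_mul_const _ (measurable_fracKernel s),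
          setLIntegral_compl_closedBall_fracKernel μ hs hR, ← mul_assoc, ← ENNReal.ofReal_mul hs.le]
        congr 2
        field_simp

lemma ofReal_mul_localFracPer_univ_le_interpolation {s t R : ℝ} (hs : 0 < s) (hst : s < t)
    (ht : t < 1) (hR : 0 < R) (E : Set V) :
    ENNReal.ofReal s * localFracPer μ s E univ ≤
      ENNReal.ofReal (dyadicConst (t - s) * R ^ (t - s)) *
          (ENNReal.ofReal (1 - t) * localFracPer μ t E univ) +
        ENNReal.ofReal (finrank ℝ V * μ.real (ball 0 1) * R ^ (-s)) * μ E := by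
  have hsplit : localFracPer μ s E univ =
      localFracPer μ s E (closedBall 0 R) + localFracPer μ s E (closedBall 0 R)ᶜ := by
    rw [localFracPer, setLIntegral_univ]
    exact (lintegral_add_compl _ measurableSet_closedBall).symm
  rw [hsplit, mul_add]
  refine add_le_add ?_ (ofReal_mul_localFracPer_compl_closedBall_le μ hs hR E)
  have hs₁ : ENNReal.ofReal s ≤ 1 := ENNReal.ofReal_le_one.2 (by linarith)
  exact (mul_le_of_le_one_left' hs₁).trans (localFracPer_closedBall_le μ hst ht hR E)

lemma measure_closedBall_div_rpow {v : ℝ} (hv : 0 ≤ v) :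
    μ (closedBall 0 ((v / μ.real (ball 0 1)) ^ (1 / (finrank ℝ V : ℝ)))) = ENNReal.ofReal v := by
  have hball : 0 < μ.real (ball (0 : V) 1) := measureReal_ball_pos μ 0 one_pos
  have hdim : (finrank ℝ V : ℝ) ≠ 0 := by exact_mod_cast finrank_pos.ne'
  rw [Measure.addHaar_closedBall _ _ (by positivity), ← ofReal_measureReal measure_ball_lt_top.ne,
    ← ENNReal.ofReal_mul (by positivity), ← Real.rpow_natCast, ← Real.rpow_mul (by positivity),
    one_div_mul_cancel hdim, Real.rpow_one, div_mul_cancel₀ _ hball.ne']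

lemma measure_mul_self_le_of_measure_closedBall_eq {t R : ℝ} (ht₀ : -finrank ℝ V < t) (ht₁ : t < 1)
    (hR : 0 < R) {E : Set V} (hE : MeasurableSet E) (hEtop : μ E ≠ ∞)
    (hER : μ (closedBall 0 R) = 2 * μ E) :
    μ E * μ E ≤ ENNReal.ofReal
        (dyadicConst (finrank ℝ V + t) * R ^ (finrank ℝ V + t)) *
      (ENNReal.ofReal (1 - t) * localFracPer μ t E univ) := by
  -- At exponent `-dim V` the kernel is constant, so the near bound also controls the unweighted
  -- integral of the translation defect.
  have hconst : localFracPer μ (-finrank ℝ V) E (closedBall 0 R) =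
      ∫⁻ h in closedBall 0 R, translationDefect μ E h ∂μ := by
    simp [localFracPer, fracKernel]
  have hupper := localFracPer_closedBall_le μ ht₀ ht₁ hR E
  rw [sub_neg_eq_add, add_comm t, hconst] at hupper
  have hlower := measure_mul_measure_le_setLIntegral_translationDefect_add μ hE (closedBall 0 R)
  rw [hER, mul_assoc, two_mul,
    ENNReal.add_le_add_iff_right (ENNReal.mul_ne_top hEtop hEtop)] at hlower
  exact hlower.trans hupper

lemma measure_mul_self_le_localFracPer_univ {t : ℝ} (ht₀ : -finrank ℝ V < t) (ht₁ : t < 1)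
    {E : Set V} (hE : MeasurableSet E) (hE₀ : μ E ≠ 0) (hEtop : μ E ≠ ∞) :
    μ E * μ E ≤
      ENNReal.ofReal (dyadicConst (finrank ℝ V + t) *
          (2 / μ.real (ball 0 1)) ^ ((finrank ℝ V + t) / finrank ℝ V)) *
        (ENNReal.ofReal (1 - t) * localFracPer μ t E univ) *
        μ E ^ ((finrank ℝ V + t) / finrank ℝ V) := by
  set d : ℝ := (finrank ℝ V : ℝ)
  have hL : 0 < μ.real E := ENNReal.toReal_pos hE₀ hEtop
  have hball : 0 < μ.real (ball (0 : V) 1) := measureReal_ball_pos μ 0 one_pos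
  have hconst : 0 < dyadicConst (d + t) := dyadicConst_pos (by linarith)
  set R := (2 * μ.real E / μ.real (ball (0 : V) 1)) ^ (1 / d) with hR
  have hER : μ (closedBall 0 R) = 2 * μ E := by
    rw [measure_closedBall_div_rpow μ (by positivity), ENNReal.ofReal_mul zero_le_two,
      ENNReal.ofReal_ofNat, ofReal_measureReal hEtop]
  have hRpow : ENNReal.ofReal (R ^ (d + t)) =
      ENNReal.ofReal ((2 / μ.real (ball (0 : V) 1)) ^ ((d + t) / d)) * μ E ^ ((d + t) / d) := by
    rw [hR, ← Real.rpow_mul (by positivity), one_div_mul_eq_div, mul_div_right_comm,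
      Real.mul_rpow (by positivity) hL.le, ENNReal.ofReal_mul (by positivity),
      ← ENNReal.ofReal_rpow_of_pos hL, ofReal_measureReal hEtop]
  refine (measure_mul_self_le_of_measure_closedBall_eq μ ht₀ ht₁ (by positivity) hE hEtop
    hER).trans_eq ?_
  rw [ENNReal.ofReal_mul hconst.le, hRpow, ENNReal.ofReal_mul hconst.le]
  ring

theorem measure_rpow_le_localFracPer_univ {t : ℝ} (ht₀ : -finrank ℝ V < t) (ht₁ : t < 1)
    {E : Set V} (hE : MeasurableSet E) (hEtop : μ E ≠ ∞) :
    μ E ^ ((finrank ℝ V - t) / finrank ℝ V) ≤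
      ENNReal.ofReal (dyadicConst (finrank ℝ V + t) *
          (2 / μ.real (ball 0 1)) ^ ((finrank ℝ V + t) / finrank ℝ V)) *
        (ENNReal.ofReal (1 - t) * localFracPer μ t E univ) := by
  have hdim : (1 : ℝ) ≤ finrank ℝ V := by exact_mod_cast finrank_pos (R := ℝ) (M := V)
  rcases eq_or_ne (μ E) 0 with hE₀ | hE₀
  · rw [hE₀, ENNReal.zero_rpow_of_pos (div_pos (by linarith) (by linarith))]
    exact zero_le
  have hsq : μ E ^ ((finrank ℝ V - t) / finrank ℝ V) * μ E ^ ((finrank ℝ V + t) / finrank ℝ V) =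
      μ E * μ E := by
    rw [← ENNReal.rpow_add _ _ hE₀ hEtop, ← add_div, sub_add_add_cancel, ← two_mul,
      mul_div_cancel_right₀ _ (by positivity), ENNReal.rpow_two, sq]
  have hpow₀ : μ E ^ ((finrank ℝ V + t) / finrank ℝ V) ≠ 0 :=
    (ENNReal.rpow_pos (pos_iff_ne_zero.2 hE₀) hEtop).ne'
  rw [← ENNReal.mul_le_mul_iff_left hpow₀ (ENNReal.rpow_ne_top_of_ne_zero hE₀ hEtop), hsq]
  exact measure_mul_self_le_localFracPer_univ μ ht₀ ht₁ hE hE₀ hEtop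

end LocalFracPer

lemma dyadicConst_add_le_exp {d t : ℝ} (hd : 1 ≤ d) (ht₀ : 0 ≤ t) (ht₁ : t ≤ 1) :
    dyadicConst (d + t) ≤ Real.exp (d - t) := by
  have hratio : (2 : ℝ) ^ (-(d + t)) ≤ (2 - t) / 4 := by
    calc (2 : ℝ) ^ (-(d + t)) ≤ 2 ^ (-2 + (1 - t)) :=
          Real.rpow_le_rpow_of_exponent_le one_le_two (by linarith)
      _ = (1 + 1) ^ (1 - t) / 4 := by
          rw [Real.rpow_add two_pos, Real.rpow_neg zero_le_two]
          norm_num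
          ring
      _ ≤ (1 + (1 - t) * 1) / 4 := by
          gcongr
          exact rpow_one_add_le_one_add_mul_self (by norm_num) (by linarith) (by linarith)
      _ = (2 - t) / 4 := by ring
  calc dyadicConst (d + t) ≤ (3 / 4) / ((2 + t) / 4) := by
        unfold dyadicConst
        gcongr
        · linarith [Real.log_two_lt_d9]
        · linarith
    _ ≤ (1 - t) + 1 := by
        rw [div_le_iff₀ (by positivity)]
        nlinarith
    _ ≤ Real.exp (1 - t) := Real.add_one_le_exp _
    _ ≤ Real.exp (d - t) := by gcongr

lemma rpow_add_div_le_exp {x t : ℝ} {n : ℕ} (hn : n ≠ 0) (hx : 0 < x) (hx₁ : n = 1 → x = 1)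
    (ht₀ : 0 ≤ t) (ht₁ : t ≤ 1) :
    x ^ ((n + t) / n) ≤ Real.exp (2 * |Real.log x| * (n - t)) := by
  obtain rfl | hn₂ : n = 1 ∨ 2 ≤ n := by lia
  · simp [hx₁ rfl]
  · have hn₂' : (2 : ℝ) ≤ n := by exact_mod_cast hn₂
    have hexponent : (n + t) / n ≤ 2 * (n - t) := by
      rw [div_le_iff₀ (by linarith)]
      nlinarith
    rw [Real.rpow_def_of_pos hx, Real.exp_le_exp]
    calc Real.log x * ((n + t) / n) ≤ |Real.log x| * (2 * (n - t)) := by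
          gcongr
          exact le_abs_self _
      _ = 2 * |Real.log x| * (n - t) := by ring

lemma le_mul_rpow_of_forall_le_add {P Q L : ℝ≥0∞} {a b K d s t : ℝ} (ha : 0 < a) (hb : 0 ≤ b)
    (hK : 0 ≤ K) (hd : 0 < d) (hsd : s < d) (htd : t < d)
    (hP : ∀ R : ℝ, 0 < R →
      P ≤ ENNReal.ofReal (a * R ^ (t - s)) * Q + ENNReal.ofReal (b * R ^ (-s)) * L)
    (hL : L ≤ ENNReal.ofReal K * Q ^ (d / (d - t))) :
    P ≤ ENNReal.ofReal (a + b * K) * Q ^ ((d - s) / (d - t)) := by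
  have hdt : 0 < d - t := by linarith
  have : 0 < d - s := by linarith
  have hpos : 0 < a + b * K := by positivity
  rcases eq_or_ne Q ∞ with rfl | hQtop
  · rw [ENNReal.top_rpow_of_pos (by positivity), ENNReal.mul_top (ENNReal.ofReal_pos.2 hpos).ne']
    exact le_top
  rcases eq_or_ne Q 0 with rfl | hQ₀
  · rw [ENNReal.zero_rpow_of_pos (by positivity), mul_zero, nonpos_iff_eq_zero] at hL
    have hP₀ : P = 0 := by simpa [hL] using hP 1 one_pos
    rw [hP₀]
    exact zero_le
  -- With `R = Q ^ (1 / (d - t))` both terms scale like `Q ^ ((d - s) / (d - t))`.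
  have hq : 0 < Q.toReal := ENNReal.toReal_pos hQ₀ hQtop
  have hR (x : ℝ) : ENNReal.ofReal ((Q.toReal ^ (1 / (d - t))) ^ x) = Q ^ (x / (d - t)) := by
    rw [← Real.rpow_mul hq.le, one_div_mul_eq_div, ← ENNReal.ofReal_rpow_of_pos hq,
      ENNReal.ofReal_toReal hQtop]
  have hnear : Q ^ ((t - s) / (d - t)) * Q = Q ^ ((d - s) / (d - t)) := by
    nth_rw 2 [← ENNReal.rpow_one Q]
    rw [← ENNReal.rpow_add _ _ hQ₀ hQtop, div_add_one hdt.ne', add_comm, sub_add_sub_cancel]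
  have hfar : Q ^ (-s / (d - t)) * Q ^ (d / (d - t)) = Q ^ ((d - s) / (d - t)) := by
    rw [← ENNReal.rpow_add _ _ hQ₀ hQtop, ← add_div, neg_add_eq_sub]
  calc P ≤ ENNReal.ofReal a * Q ^ ((t - s) / (d - t)) * Q +
          ENNReal.ofReal b * Q ^ (-s / (d - t)) * (ENNReal.ofReal K * Q ^ (d / (d - t))) := by
        rw [← hR, ← hR, ← ENNReal.ofReal_mul ha.le, ← ENNReal.ofReal_mul hb]
        exact (hP (Q.toReal ^ (1 / (d - t))) (by positivity)).trans (by gcongr)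
    _ = ENNReal.ofReal a * (Q ^ ((t - s) / (d - t)) * Q) +
          ENNReal.ofReal b * ENNReal.ofReal K * (Q ^ (-s / (d - t)) * Q ^ (d / (d - t))) := by ring
    _ = ENNReal.ofReal (a + b * K) * Q ^ ((d - s) / (d - t)) := by
        rw [hnear, hfar, ← ENNReal.ofReal_mul hb, ← add_mul,
          ← ENNReal.ofReal_add ha.le (by positivity)]

lemma fracPer_eq_localFracPer_univ {N : ℕ} (α : ℝ) {E : Set (EuclideanSpace ℝ (Fin N))}
    (hE : MeasurableSet E) : fracPer N α E = localFracPer volume α E univ := by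
  rw [localFracPer, setLIntegral_univ]
  refine Eq.trans ?_
    (setLIntegral_setLIntegral_sub volume E hE.compl (measurable_fracKernel α))
  simp only [fracPer, interEnergy, fracKernel, finrank_euclideanSpace_fin, norm_sub_rev]

lemma volume_real_ball_euclideanSpace_fin_one :
    volume.real (ball (0 : EuclideanSpace ℝ (Fin 1)) 1) = 2 := by
  have hGamma : Real.Gamma (1 / 2 + 1) = √Real.pi / 2 := by
    rw [Real.Gamma_add_one (by norm_num), Real.Gamma_one_half_eq]
    ring
  rw [measureReal_def, EuclideanSpace.volume_ball, Fintype.card_fin, Nat.cast_one, hGamma,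
    ENNReal.ofReal_one, pow_one, pow_one, one_mul, ENNReal.toReal_ofReal (by positivity)]
  field_simp

theorem exists_volume_le_fracPer_rpow {N : ℕ} (hN : 0 < N) :
    ∃ K : ℝ, 0 ≤ K ∧ ∀ t : ℝ, 0 < t → t < 1 →
      ∀ E : Set (EuclideanSpace ℝ (Fin N)), MeasurableSet E → volume E ≠ ∞ →
        volume E ≤ ENNReal.ofReal K *
          (ENNReal.ofReal (1 - t) * fracPer N t E) ^ ((N : ℝ) / (N - t)) := by
  have : Nonempty (Fin N) := Fin.pos_iff_nonempty.1 hN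
  have hN₁ : (1 : ℝ) ≤ N := by exact_mod_cast hN
  set ω := volume.real (ball (0 : EuclideanSpace ℝ (Fin N)) 1)
  have hω : 0 < ω := measureReal_ball_pos volume 0 one_pos
  have hω₁ : N = 1 → 2 / ω = 1 := by
    rintro rfl
    rw [div_eq_one_iff_eq hω.ne', ← volume_real_ball_euclideanSpace_fin_one]
  -- For `N = 1` the exponent `N / (N - t)` blows up as `t → 1`, so the constant raised to it has to
  -- be at most `exp (a * (N - t))`; this relies on `2 / ω = 1`.
  set a := 1 + 2 * |Real.log (2 / ω)| with ha
  refine ⟨Real.exp (a * N), by positivity, fun t ht₀ ht₁ E hE hEtop ↦ ?_⟩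
  have hNt : 0 < N - t := by linarith
  have hconst : dyadicConst (N + t) * (2 / ω) ^ ((N + t) / N) ≤ Real.exp (a * (N - t)) := by
    rw [ha, add_mul, one_mul, Real.exp_add]
    gcongr
    · exact dyadicConst_add_le_exp hN₁ ht₀.le ht₁.le
    · exact rpow_add_div_le_exp hN.ne' (by positivity) hω₁ ht₀.le ht₁.le
  have hiso := measure_rpow_le_localFracPer_univ volume
    (by rw [finrank_euclideanSpace_fin]; linarith) ht₁ hE hEtop
  rw [finrank_euclideanSpace_fin, ← fracPer_eq_localFracPer_univ t hE] at hiso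
  set Q := ENNReal.ofReal (1 - t) * fracPer N t E
  calc volume E = (volume E ^ ((N - t) / N)) ^ (N / (N - t)) := by
        rw [← ENNReal.rpow_mul, div_mul_div_cancel₀ (by positivity), div_self hNt.ne',
          ENNReal.rpow_one]
    _ ≤ (ENNReal.ofReal (Real.exp (a * (N - t))) * Q) ^ (N / (N - t)) := by
        gcongr
        exact hiso.trans (by gcongr)
    _ = ENNReal.ofReal (Real.exp (a * N)) * Q ^ (N / (N - t)) := by
        rw [ENNReal.mul_rpow_of_nonneg _ _ (by positivity),
          ENNReal.ofReal_rpow_of_pos (by positivity), ← Real.exp_mul, mul_assoc,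
          mul_div_cancel₀ _ hNt.ne']

/-- A fractional isoperimetric-type inequality:
`((1-t) P_t(E))^{(N-s)/(N-t)} ≥ c · s P_s(E)` in `[0,∞]`. -/
theorem stmt17 (N : ℕ) (hN : 0 < N) (δ₀ : ℝ) (hδ : δ₀ ∈ Set.Ioo (0 : ℝ) 1) :
    ∃ c : ℝ, 0 < c ∧
      ∀ s t : ℝ, 0 < s → s < t → t < 1 → δ₀ ≤ t - s →
        ∀ E : Set (EuclideanSpace ℝ (Fin N)), MeasurableSet E → volume E < ⊤ →
          ENNReal.ofReal c * (ENNReal.ofReal s * fracPer N s E) ≤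
            (ENNReal.ofReal (1 - t) * fracPer N t E) ^
              (((N : ℝ) - s) / ((N : ℝ) - t)) := by
  obtain ⟨K, hK, hiso⟩ := exists_volume_le_fracPer_rpow hN
  have : Nonempty (Fin N) := Fin.pos_iff_nonempty.1 hN
  have hN₁ : (1 : ℝ) ≤ N := by exact_mod_cast hN
  set a := dyadicConst δ₀
  set b := N * volume.real (ball (0 : EuclideanSpace ℝ (Fin N)) 1)
  have ha : 0 < a := dyadicConst_pos hδ.1
  have hC : 0 < a + b * K := by positivity
  refine ⟨(a + b * K)⁻¹, by positivity, fun s t hs hst ht hδst E hE hEtop ↦ ?_⟩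
  rw [ENNReal.ofReal_inv_of_pos hC,
    ENNReal.inv_mul_le_iff (ENNReal.ofReal_pos.2 hC).ne' ENNReal.ofReal_ne_top]
  refine le_mul_rpow_of_forall_le_add ha (by positivity) hK (by positivity) (by linarith)
    (by linarith) (fun R hR ↦ ?_) (hiso t (hs.trans hst) ht E hE hEtop.ne)
  have hinterp := ofReal_mul_localFracPer_univ_le_interpolation volume hs hst ht hR E
  rw [finrank_euclideanSpace_fin, ← fracPer_eq_localFracPer_univ s hE,
    ← fracPer_eq_localFracPer_univ t hE] at hinterp
  refine hinterp.trans ?_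
  gcongr
  exact dyadicConst_le_of_le hδ.1 hδst
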